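/- Let (G,c,o) be an infinite recurrent rooted network. Then there exists a potential h on (G,c,o) which tends to infinity, i.e., for every M>0 the set {v ∈ V : h(v) ≤ M} is finite. -/

import Mathlib

open scoped ENNReal
open Filter Topology Classical
noncomputable section

/-- A rooted network: a connected, locally finite simple graph with positive
symmetric edge conductances (extended by `0` to non-edges) and a root `o`. -/
structure RootedNetwork (V : Type*) where
  G : SimpleGraph V
  locallyFinite : ∀ x : V, (G.neighborSet x).Finite
  connected : G.Connected
  c : V → V → ℝ
  c_symm : ∀ x y, c x y = c y x
  c_pos : ∀ x y, G.Adj x y → 0 < c x y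
  c_eq_zero : ∀ x y, ¬ G.Adj x y → c x y = 0
  o : V

namespace RootedNetwork

variable {V : Type*}

/-- The vertex weight `c_x = Σ_{z ∼ x} c_{xz}`. -/
noncomputable def cv (N : RootedNetwork V) (x : V) : ℝ := ∑' y, N.c x y

/-- The transition probability `p(x,y) = c_{xy} / c_x` of the network random walk. -/
noncomputable def p (N : RootedNetwork V) (x y : V) : ℝ≥0∞ :=
  ENNReal.ofReal (N.c x y / N.cv x)

/-- The probability that the network random walk started at `x` begins with the
given finite sequence of steps. -/
noncomputable def pathProb (N : RootedNetwork V) : V → List V → ℝ≥0∞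
  | _, [] => 1
  | x, y :: l => N.p x y * pathProb N y l

/-- The probability, starting from `x`, that the walk ever visits `b`
(`P_x(τ_b < ∞)`), computed by decomposing over the finite path up to the first
visit of `b`. -/
noncomputable def hitProb (N : RootedNetwork V) (x b : V) : ℝ≥0∞ :=
  if x = b then 1
  else ∑' l : {l : List V // l.getLast? = some b ∧ b ∉ l.dropLast}, N.pathProb x l.1

/-- A rooted network is recurrent if the walk started from any vertex almost
surely visits the root `o`. -/
def Recurrent (N : RootedNetwork V) : Prop := ∀ x : V, N.hitProb x N.o = 1

/-- The Green kernel `G_o(x,y) = Σ_{n ≥ 0} P_x(X_n = y, τ_o > n)` of the walk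
killed at the root, computed as a sum over finite paths from `x` to `y`
avoiding `o` (the `n = 0` term is the first summand). -/
noncomputable def GreenKer (N : RootedNetwork V) (x y : V) : ℝ≥0∞ :=
  (if x = y ∧ x ≠ N.o then 1 else 0) +
    ∑' l : {l : List V // l.getLast? = some y ∧ N.o ∉ x :: l}, N.pathProb x l.1

/-- The Green density `g_o(x,y) = G_o(x,y) / c_y`. -/
noncomputable def greenDensity (N : RootedNetwork V) (x y : V) : ℝ≥0∞ :=
  N.GreenKer x y / ENNReal.ofReal (N.cv y)

/-- The network Laplacian `Δ f (v) = Σ_{x ∼ v} c_{vx} (f(x) - f(v))`. -/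
noncomputable def lap (N : RootedNetwork V) (f : V → ℝ) (v : V) : ℝ :=
  ∑' x, N.c v x * (f x - f v)

/-- A potential: a nonnegative function vanishing at `o`, with Laplacian `1`
at `o`, harmonic everywhere else. -/
def IsPotential (N : RootedNetwork V) (h : V → ℝ) : Prop :=
  (∀ v, 0 ≤ h v) ∧ h N.o = 0 ∧ N.lap h N.o = 1 ∧ ∀ v, v ≠ N.o → N.lap h v = 0

end RootedNetwork

/-!
Let `φ_B` be the probability of hitting the root `o` before leaving the finite set `B`. Recurrence
means that `φ_B → 1`, so the effective conductance `-Δφ_B(o)` from `o` to the complement of `B`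
tends to `0`: a function that is harmonic on `B \ {o}` and has Laplacian `n` at `o` must have
Dirichlet energy much larger than `n ^ 2`.

Suppose that, for some `M`, no potential is at least `M` off a finite set. By compactness, every
function that is a potential on a large finite set falls below `M` far away from `o`. Applying this
to normalized sums of Green functions `g_y` of the walk killed at `o` and off a large set, one
chooses greedily a set `Y` of `n` far away points with `∑ x ≠ y, g_y x ≤ n ^ 2 * M`. Truncating each
`g_y` at a fixed height `T`, which does not change it near `o`, gives a function of energy at most
`n * T + n ^ 2 * M` whose Laplacian at `o` is at least `n / 2`, a contradiction for large `n`. So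
for every `M` some potential is at least `M` off a finite set, and a dyadic convex combination of
such potentials tends to infinity.
-/

namespace RootedNetwork

variable {V : Type*} (N : RootedNetwork V)

/-- The finite set of neighbours of a vertex. -/
def nbhd (x : V) : Finset V := (N.locallyFinite x).toFinset

variable {N} in
lemma mem_nbhd {x y : V} : y ∈ N.nbhd x ↔ N.G.Adj x y := by
  simp [nbhd]

lemma c_eq_zero_of_notMem_nbhd {x y : V} (h : y ∉ N.nbhd x) : N.c x y = 0 :=
  N.c_eq_zero x y fun hxy ↦ h (mem_nbhd.2 hxy)

lemma c_nonneg (x y : V) : 0 ≤ N.c x y := by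
  by_cases h : N.G.Adj x y
  · exact (N.c_pos x y h).le
  · exact (N.c_eq_zero x y h).ge

lemma cv_eq_sum (x : V) : N.cv x = ∑ z ∈ N.nbhd x, N.c x z :=
  tsum_eq_sum fun _ hz ↦ N.c_eq_zero_of_notMem_nbhd hz

lemma cv_nonneg (x : V) : 0 ≤ N.cv x :=
  tsum_nonneg (N.c_nonneg x)

lemma sum_c_le_cv (A : Finset V) (x : V) : ∑ z ∈ A, N.c x z ≤ N.cv x :=
  (summable_of_ne_finset_zero fun _ hz ↦ N.c_eq_zero_of_notMem_nbhd hz).sum_le_tsum A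
    fun z _ ↦ N.c_nonneg x z

lemma lap_eq_sum (f : V → ℝ) (x : V) :
    N.lap f x = ∑ z ∈ N.nbhd x, N.c x z * (f z - f x) :=
  tsum_eq_sum fun z hz ↦ by rw [N.c_eq_zero_of_notMem_nbhd hz, zero_mul]

lemma lap_eq_sum_sub (f : V → ℝ) (x : V) :
    N.lap f x = ∑ z ∈ N.nbhd x, N.c x z * f z - N.cv x * f x := by
  simp only [lap_eq_sum, cv_eq_sum, mul_sub, Finset.sum_sub_distrib, Finset.sum_mul]

/-- The Laplacian at a vertex, as a continuous linear functional for the topology of pointwise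
convergence. -/
def lapCLM (x : V) : (V → ℝ) →L[ℝ] ℝ :=
  ∑ z ∈ N.nbhd x, N.c x z •
    (.proj (R := ℝ) (φ := fun _ : V ↦ ℝ) z - .proj (R := ℝ) (φ := fun _ : V ↦ ℝ) x)

@[simp]
lemma lapCLM_apply (x : V) (f : V → ℝ) : N.lapCLM x f = N.lap f x := by
  simp [lapCLM, lap_eq_sum]

lemma lap_const (a : ℝ) (x : V) : N.lap (fun _ ↦ a) x = 0 := by
  simp [lap_eq_sum]

lemma lap_add (f g : V → ℝ) (x : V) : N.lap (f + g) x = N.lap f x + N.lap g x := by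
  simp only [← lapCLM_apply, map_add]

lemma lap_sub (f g : V → ℝ) (x : V) : N.lap (f - g) x = N.lap f x - N.lap g x := by
  simp only [← lapCLM_apply, map_sub]

lemma lap_smul (a : ℝ) (f : V → ℝ) (x : V) : N.lap (a • f) x = a * N.lap f x := by
  simp only [← lapCLM_apply, map_smul, smul_eq_mul]

lemma lap_sum {ι : Type*} (s : Finset ι) (f : ι → V → ℝ) (x : V) :
    N.lap (∑ i ∈ s, f i) x = ∑ i ∈ s, N.lap (f i) x := by
  simp only [← lapCLM_apply, map_sum]

lemma tendsto_lap {ι : Type*} {l : Filter ι} {f : ι → V → ℝ} {g : V → ℝ}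
    (h : Tendsto f l (𝓝 g)) (x : V) : Tendsto (fun i ↦ N.lap (f i) x) l (𝓝 (N.lap g x)) := by
  simp only [← lapCLM_apply]
  exact ((N.lapCLM x).continuous.tendsto g).comp h

variable {N} {f g : V → ℝ} {x : V}

lemma lap_le_lap_of_le (h : f ≤ g) (hx : f x = g x) : N.lap f x ≤ N.lap g x := by
  simp only [lap_eq_sum, hx]
  gcongr with z _
  · exact N.c_nonneg x z
  · exact h z

lemma lap_congr_of_nbhd (hx : f x = g x) (h : ∀ z ∈ N.nbhd x, f z = g z) :
    N.lap f x = N.lap g x := by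
  simp only [lap_eq_sum, hx]
  exact Finset.sum_congr rfl fun z hz ↦ by rw [h z hz]

lemma lap_min_const_nonpos (T : ℝ) (hf : N.lap f x ≤ 0) :
    N.lap (fun z ↦ min (f z) T) x ≤ 0 := by
  rcases le_total (f x) T with h | h
  · exact (lap_le_lap_of_le (fun z ↦ min_le_left _ _) (min_eq_left h)).trans hf
  · exact (lap_le_lap_of_le (fun z ↦ min_le_right _ _) (min_eq_right h)).trans_eq
      (N.lap_const T x)

/-! ### The finite Dirichlet problem -/

lemma eq_of_adj_of_forall_le {y : V} (hmax : ∀ z, f z ≤ f x) (hf : 0 ≤ N.lap f x)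
    (hxy : N.G.Adj x y) : f y = f x := by
  have hterm : ∀ z ∈ N.nbhd x, N.c x z * (f z - f x) ≤ 0 := fun z _ ↦
    mul_nonpos_of_nonneg_of_nonpos (N.c_nonneg x z) (sub_nonpos.2 (hmax z))
  have hsum : ∑ z ∈ N.nbhd x, N.c x z * (f z - f x) = 0 :=
    le_antisymm (Finset.sum_nonpos hterm) (N.lap_eq_sum f x ▸ hf)
  have hzero := (Finset.sum_eq_zero_iff_of_nonpos hterm).1 hsum y (mem_nbhd.2 hxy)
  exact sub_eq_zero.1 ((mul_eq_zero.1 hzero).resolve_left (N.c_pos x y hxy).ne')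

lemma induction_on_adj {P : V → Prop} {a : V} (ha : P a)
    (hadj : ∀ x y, P x → N.G.Adj x y → P y) (b : V) : P b := by
  have hab := (N.G.reachable_iff_reflTransGen a b).1 (N.connected a b)
  induction hab with
  | refl => exact ha
  | tail _ hxy ih => exact hadj _ _ ih hxy

theorem nonpos_of_lap_nonneg {F : Finset V} {a : V} (ha : a ∉ F)
    (hF : ∀ x ∈ F, 0 ≤ N.lap f x) (hout : ∀ x ∉ F, f x ≤ 0) : f ≤ 0 := by
  by_contra hpos
  obtain ⟨y, hy⟩ : ∃ y, 0 < f y := by simpa [Pi.le_def] using hpos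
  have mem_of_pos : ∀ z, 0 < f z → z ∈ F := fun z hz ↦ by
    by_contra hzF
    exact (hout z hzF).not_gt hz
  obtain ⟨m, -, hm⟩ := F.exists_max_image f ⟨y, mem_of_pos y hy⟩
  have hmpos : 0 < f m := hy.trans_le (hm y (mem_of_pos y hy))
  have hmax : ∀ z, f z ≤ f m := fun z ↦ by
    by_cases hz : z ∈ F
    · exact hm z hz
    · exact (hout z hz).trans hmpos.le
  have hconst : f a = f m := by
    refine N.induction_on_adj (P := fun z ↦ f z = f m) rfl (fun x z hx hxz ↦ ?_) a
    exact (eq_of_adj_of_forall_le (hx ▸ hmax) (hF x (mem_of_pos x (hx ▸ hmpos))) hxz).trans hx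
  exact (hout a ha).not_gt (hconst ▸ hmpos)

theorem le_of_lap_le {F : Finset V} {a : V} (ha : a ∉ F)
    (hF : ∀ x ∈ F, N.lap g x ≤ N.lap f x) (hout : ∀ x ∉ F, f x ≤ g x) : f ≤ g :=
  sub_nonpos.1 <| nonpos_of_lap_nonneg (N := N) ha
    (fun x hx ↦ by rw [lap_sub]; exact sub_nonneg.2 (hF x hx))
    fun x hx ↦ sub_nonpos.2 (hout x hx)

variable (N) in
theorem exists_dirichlet_solution {F : Finset V} {a : V} (ha : a ∉ F) (b ρ : V → ℝ) :
    ∃ u : V → ℝ, (∀ x ∉ F, u x = b x) ∧ ∀ x ∈ F, N.lap u x = ρ x := by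
  let ext := Function.ExtendByZero.linearMap ℝ (Subtype.val : F → V)
  have ext_out : ∀ v, ∀ x ∉ F, ext v x = 0 := fun v x hx ↦
    Function.extend_apply' _ _ _ (by simpa using hx)
  let L : (F → ℝ) →ₗ[ℝ] F → ℝ := LinearMap.pi fun x ↦ (N.lapCLM x).toLinearMap ∘ₗ ext
  have hL : ∀ v (x : F), L v x = N.lap (ext v) x := fun v x ↦ N.lapCLM_apply x _
  have hinj : Function.Injective L := by
    rw [injective_iff_map_eq_zero]
    intro v hv
    have hlap : ∀ x ∈ F, N.lap (ext v) x = N.lap (fun _ ↦ 0) x := fun x hx ↦ by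
      rw [lap_const, ← hL v ⟨x, hx⟩, hv, Pi.zero_apply]
    have hext : ext v = fun _ ↦ 0 :=
      le_antisymm (le_of_lap_le ha (fun x hx ↦ (hlap x hx).ge) fun x hx ↦ (ext_out v x hx).le)
        (le_of_lap_le ha (fun x hx ↦ (hlap x hx).le) fun x hx ↦ (ext_out v x hx).ge)
    funext x
    exact (Subtype.val_injective.extend_apply v 0 x).symm.trans (congrFun hext x)
  obtain ⟨v, hv⟩ := LinearMap.injective_iff_surjective.1 hinj fun x ↦ ρ x - N.lap b x
  refine ⟨b + ext v, fun x hx ↦ by simp [ext_out v x hx], fun x hx ↦ ?_⟩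
  rw [lap_add, ← hL v ⟨x, hx⟩, hv, add_sub_cancel]


/-! ### Hitting probabilities and superharmonic functions -/

lemma tsum_list {α : Type*} (f : List α → ℝ≥0∞) :
    ∑' l, f l = f [] + ∑' (y : α) (l : List α), f (y :: l) := by
  have hinj : Function.Injective fun q : α × List α ↦ q.1 :: q.2 := fun _ _ h ↦
    Prod.ext (List.cons.inj h).1 (List.cons.inj h).2
  rw [ENNReal.tsum_eq_add_tsum_ite [], ← hinj.tsum_eq, ENNReal.tsum_prod']
  · simp
  · rintro (_ | ⟨y, l⟩) hl
    · simp at hl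
    · exact ⟨(y, l), rfl⟩

/-- The list of steps `l` stops at its first visit of `b`. -/
def IsFirstPassage (b : V) (l : List V) : Prop :=
  l.getLast? = some b ∧ b ∉ l.dropLast

lemma not_isFirstPassage_nil (b : V) : ¬ IsFirstPassage b [] := by
  simp [IsFirstPassage]

lemma isFirstPassage_cons_self {b : V} {l : List V} : IsFirstPassage b (b :: l) ↔ l = [] := by
  cases l <;> simp [IsFirstPassage]

lemma isFirstPassage_cons_of_ne {b y : V} {l : List V} (hy : y ≠ b) :
    IsFirstPassage b (y :: l) ↔ IsFirstPassage b l := by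
  cases l <;> simp [IsFirstPassage, hy, hy.symm]

lemma tsum_p_mul_le {u : V → ℝ} (hu : 0 ≤ u) (hx : N.lap u x ≤ 0) :
    ∑' y, N.p x y * ENNReal.ofReal (u y) ≤ ENNReal.ofReal (u x) := by
  have hweight : ∀ y, 0 ≤ N.c x y / N.cv x := fun y ↦ div_nonneg (N.c_nonneg x y) (N.cv_nonneg x)
  have hsum : ∑ y ∈ N.nbhd x, N.c x y / N.cv x * u y ≤ u x := by
    simp only [div_mul_eq_mul_div, ← Finset.sum_div]
    refine div_le_of_le_mul₀ (N.cv_nonneg x) (hu x) ?_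
    rwa [lap_eq_sum_sub, sub_nonpos, mul_comm (N.cv x)] at hx
  calc ∑' y, N.p x y * ENNReal.ofReal (u y)
      = ∑ y ∈ N.nbhd x, N.p x y * ENNReal.ofReal (u y) :=
        tsum_eq_sum fun y hy ↦ by simp [p, N.c_eq_zero_of_notMem_nbhd hy]
    _ = ENNReal.ofReal (∑ y ∈ N.nbhd x, N.c x y / N.cv x * u y) := by
        rw [ENNReal.ofReal_sum_of_nonneg fun y _ ↦ mul_nonneg (hweight y) (hu y)]
        exact Finset.sum_congr rfl fun y _ ↦ (ENNReal.ofReal_mul (hweight y)).symm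
    _ ≤ ENNReal.ofReal (u x) := ENNReal.ofReal_le_ofReal hsum

lemma tsum_pathProb_firstPassage_le {b : V} {u : V → ℝ} (hu : 0 ≤ u)
    (hsuper : ∀ x, x ≠ b → N.lap u x ≤ 0) (hb : 1 ≤ u b) (n : ℕ) {x : V} (hx : x ≠ b) :
    ∑' l, (if IsFirstPassage b l ∧ l.length ≤ n then N.pathProb x l else 0)
      ≤ ENNReal.ofReal (u x) := by
  induction n generalizing x with
  | zero =>
    have hzero : ∀ l : List V, ¬ (IsFirstPassage b l ∧ l.length ≤ 0) := by
      rintro l ⟨hl, hlen⟩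
      exact not_isFirstPassage_nil b (List.length_eq_zero_iff.1 (Nat.le_zero.1 hlen) ▸ hl)
    simp only [hzero, if_false, tsum_zero, zero_le]
  | succ n ih =>
    rw [tsum_list, if_neg fun h ↦ not_isFirstPassage_nil b h.1, zero_add]
    refine (ENNReal.tsum_le_tsum fun y ↦ ?_).trans (tsum_p_mul_le hu (hsuper x hx))
    by_cases hy : y = b
    · subst hy
      rw [tsum_eq_single [] fun l hl ↦ if_neg fun h ↦ hl (isFirstPassage_cons_self.1 h.1)]
      simpa [isFirstPassage_cons_self, pathProb] using
        le_mul_of_one_le_right' (a := N.p x y) (ENNReal.one_le_ofReal.2 hb)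
    · simp only [isFirstPassage_cons_of_ne hy, pathProb, List.length_cons, add_le_add_iff_right,
        ← mul_ite_zero, ENNReal.tsum_mul_left]
      gcongr
      exact ih hy

theorem hitProb_le_ofReal {b : V} {u : V → ℝ} (hu : 0 ≤ u)
    (hsuper : ∀ x, x ≠ b → N.lap u x ≤ 0) (hb : 1 ≤ u b) (hx : x ≠ b) :
    N.hitProb x b ≤ ENNReal.ofReal (u x) := by
  rw [hitProb, if_neg hx, ENNReal.tsum_eq_iSup_sum]
  refine iSup_le fun S ↦ ?_
  let n := S.sup fun l ↦ l.1.length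
  let q : List V → ℝ≥0∞ := fun l ↦
    if IsFirstPassage b l ∧ l.length ≤ n then N.pathProb x l else 0
  calc ∑ l ∈ S, N.pathProb x l.1
      = ∑ l ∈ S, q l.1 := Finset.sum_congr rfl fun l hl ↦
        (if_pos ⟨l.2, Finset.le_sup (f := fun l ↦ l.1.length) hl⟩).symm
    _ ≤ ∑' l : {l : List V // IsFirstPassage b l}, q l.1 := ENNReal.sum_le_tsum S
    _ ≤ ∑' l, q l := ENNReal.tsum_comp_le_tsum_of_injective Subtype.val_injective q
    _ ≤ ENNReal.ofReal (u x) := tsum_pathProb_firstPassage_le hu hsuper hb n hx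

theorem Recurrent.one_le_of_superharmonic (hrec : N.Recurrent) {u : V → ℝ} (hu : 0 ≤ u)
    (hsuper : ∀ x, x ≠ N.o → N.lap u x ≤ 0) (ho : 1 ≤ u N.o) : 1 ≤ u := fun x ↦ by
  by_cases hx : x = N.o
  · exact hx ▸ ho
  · have hhit := hitProb_le_ofReal hu hsuper ho hx
    rwa [hrec x, ENNReal.one_le_ofReal] at hhit

/-! ### The probability of hitting the root before leaving a finite set -/

variable (N) in
/-- The probability that the walk from a vertex visits the root before it leaves `A`, encoded as
the function equal to `1` at the root, to `0` off `A`, and harmonic in between. -/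
def hitBeforeExit (A : Finset V) : V → ℝ :=
  (N.exists_dirichlet_solution (A.notMem_erase N.o) (Pi.single N.o 1) 0).choose

section HitBeforeExit

variable {A B : Finset V}

lemma hitBeforeExit_of_notMem_erase (hx : x ∉ A.erase N.o) :
    N.hitBeforeExit A x = Pi.single (M := fun _ ↦ ℝ) N.o 1 x :=
  (N.exists_dirichlet_solution (A.notMem_erase N.o) (Pi.single N.o 1) 0).choose_spec.1 x hx

lemma lap_hitBeforeExit (hx : x ∈ A.erase N.o) : N.lap (N.hitBeforeExit A) x = 0 :=
  (N.exists_dirichlet_solution (A.notMem_erase N.o) (Pi.single N.o 1) 0).choose_spec.2 x hx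

lemma hitBeforeExit_root : N.hitBeforeExit A N.o = 1 := by
  rw [hitBeforeExit_of_notMem_erase (A.notMem_erase N.o), Pi.single_eq_same]

lemma hitBeforeExit_of_notMem (ho : N.o ∈ A) (hx : x ∉ A) : N.hitBeforeExit A x = 0 := by
  rw [hitBeforeExit_of_notMem_erase fun h ↦ hx (Finset.mem_of_mem_erase h),
    Pi.single_eq_of_ne (ne_of_mem_of_not_mem ho hx).symm]

lemma hitBeforeExit_nonneg : 0 ≤ N.hitBeforeExit A :=
  le_of_lap_le (A.notMem_erase N.o)
    (fun x hx ↦ by rw [lap_hitBeforeExit hx]; exact (N.lap_const 0 x).ge)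
    fun x hx ↦ by
      rw [hitBeforeExit_of_notMem_erase hx]
      exact (Pi.single_nonneg.2 zero_le_one : 0 ≤ Pi.single (M := fun _ ↦ ℝ) N.o 1) x

lemma hitBeforeExit_le_one : N.hitBeforeExit A ≤ 1 :=
  le_of_lap_le (A.notMem_erase N.o)
    (fun x hx ↦ by rw [lap_hitBeforeExit hx]; exact (N.lap_const 1 x).le)
    fun x hx ↦ by
      rw [hitBeforeExit_of_notMem_erase hx, Pi.single_apply]
      split_ifs <;> simp

lemma hitBeforeExit_mono (hAB : A ⊆ B) : N.hitBeforeExit A ≤ N.hitBeforeExit B :=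
  le_of_lap_le (A.notMem_erase N.o)
    (fun x hx ↦ ((lap_hitBeforeExit (Finset.erase_subset_erase _ hAB hx)).trans
      (lap_hitBeforeExit hx).symm).le)
    fun x hx ↦ by
      rw [hitBeforeExit_of_notMem_erase hx, Pi.single_apply]
      split_ifs with hxo
      · rw [hxo, hitBeforeExit_root]
      · exact hitBeforeExit_nonneg x

lemma lap_hitBeforeExit_root_nonpos : N.lap (N.hitBeforeExit A) N.o ≤ 0 :=
  (lap_le_lap_of_le hitBeforeExit_le_one hitBeforeExit_root).trans_eq (N.lap_const 1 N.o)

lemma eventually_mem_erase (hx : x ≠ N.o) : ∀ᶠ A : Finset V in atTop, x ∈ A.erase N.o := by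
  filter_upwards [eventually_ge_atTop {x}] with A hA
  exact Finset.mem_erase.2 ⟨hx, hA (Finset.mem_singleton_self x)⟩

theorem Recurrent.tendsto_hitBeforeExit (hrec : N.Recurrent) :
    Tendsto N.hitBeforeExit atTop (𝓝 1) := by
  let φ : V → ℝ := fun x ↦ ⨆ A, N.hitBeforeExit A x
  have hlim : Tendsto N.hitBeforeExit atTop (𝓝 φ) := tendsto_pi_nhds.2 fun x ↦
    tendsto_atTop_ciSup (fun _ _ hAB ↦ hitBeforeExit_mono hAB x)
      ⟨1, Set.forall_mem_range.2 fun _ ↦ hitBeforeExit_le_one x⟩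
  have hharm : ∀ x, x ≠ N.o → N.lap φ x ≤ 0 := fun x hx ↦
    (tendsto_nhds_unique_of_eventuallyEq (N.tendsto_lap hlim x) tendsto_const_nhds <|
      (eventually_mem_erase hx).mono fun _ ↦ lap_hitBeforeExit).le
  have hroot : 1 ≤ φ N.o := by simp [φ, hitBeforeExit_root]
  have hφ : φ = 1 := le_antisymm
    (le_of_tendsto' hlim fun _ ↦ hitBeforeExit_le_one)
    (hrec.one_le_of_superharmonic (ge_of_tendsto' hlim fun _ ↦ hitBeforeExit_nonneg) hharm hroot)
  rwa [hφ] at hlim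

lemma Recurrent.exists_neg_lap_hitBeforeExit_root_lt (hrec : N.Recurrent) {ε : ℝ} (hε : 0 < ε) :
    ∃ B, N.o ∈ B ∧ -N.lap (N.hitBeforeExit B) N.o < ε := by
  have hlim : Tendsto (fun B ↦ N.lap (N.hitBeforeExit B) N.o) atTop (𝓝 0) :=
    N.lap_const 1 N.o ▸ N.tendsto_lap hrec.tendsto_hitBeforeExit N.o
  have hmem : ∀ᶠ B in atTop, N.o ∈ B :=
    (eventually_ge_atTop {N.o}).mono fun _ ↦ Finset.singleton_subset_iff.1
  have hlt : ∀ᶠ B in atTop, -ε < N.lap (N.hitBeforeExit B) N.o :=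
    hlim.eventually_const_lt (neg_lt_zero.2 hε)
  exact (hmem.and (hlt.mono fun _ ↦ neg_lt.1)).exists

end HitBeforeExit

/-! ### Dirichlet energy -/

variable (N) in
/-- The Dirichlet form `-∑ x ∈ A, f x * Δg x`. It is symmetric and nonnegative only on functions
vanishing off `A`. -/
def energy (A : Finset V) : LinearMap.BilinForm ℝ (V → ℝ) :=
  -∑ x ∈ A, LinearMap.BilinForm.linMulLin (LinearMap.proj x) (N.lapCLM x).toLinearMap

section Energy

variable {A B : Finset V}

lemma energy_apply : N.energy A f g = -∑ x ∈ A, f x * N.lap g x := by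
  simp [energy, LinearMap.sum_apply]

lemma energy_eq_sum_sub_sum (hg : ∀ x ∉ A, g x = 0) :
    N.energy A f g
      = ∑ x ∈ A, N.cv x * f x * g x - ∑ x ∈ A, ∑ z ∈ A, N.c x z * f x * g z := by
  have hlap : ∀ x, N.lap g x = ∑ z ∈ A, N.c x z * g z - N.cv x * g x := fun x ↦ by
    have hnbhd : ∑' z, N.c x z * g z = ∑ z ∈ N.nbhd x, N.c x z * g z :=
      tsum_eq_sum fun z hz ↦ by rw [N.c_eq_zero_of_notMem_nbhd hz, zero_mul]
    rw [lap_eq_sum_sub, ← hnbhd, tsum_eq_sum fun z hz ↦ by rw [hg z hz, mul_zero]]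
  rw [energy_apply, ← Finset.sum_sub_distrib, ← Finset.sum_neg_distrib]
  refine Finset.sum_congr rfl fun x _ ↦ ?_
  rw [hlap, mul_sub, Finset.mul_sum, neg_sub]
  congr 1
  · ring
  · exact Finset.sum_congr rfl fun z _ ↦ by ring

lemma energy_symm (hf : ∀ x ∉ A, f x = 0) (hg : ∀ x ∉ A, g x = 0) :
    N.energy A f g = N.energy A g f := by
  rw [energy_eq_sum_sub_sum hf, energy_eq_sum_sub_sum hg]
  congr 1
  · exact Finset.sum_congr rfl fun x _ ↦ by ring
  · rw [Finset.sum_comm]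
    exact Finset.sum_congr rfl fun x _ ↦ Finset.sum_congr rfl fun z _ ↦ by
      rw [N.c_symm]; ring

lemma energy_self_nonneg (hf : ∀ x ∉ A, f x = 0) : 0 ≤ N.energy A f f := by
  rw [energy_eq_sum_sub_sum hf, sub_nonneg]
  have hswap : ∑ x ∈ A, ∑ z ∈ A, N.c x z * f z ^ 2 = ∑ x ∈ A, ∑ z ∈ A, N.c x z * f x ^ 2 := by
    rw [Finset.sum_comm]
    simp only [N.c_symm]
  calc ∑ x ∈ A, ∑ z ∈ A, N.c x z * f x * f z
      ≤ ∑ x ∈ A, ∑ z ∈ A, (N.c x z * f x ^ 2 + N.c x z * f z ^ 2) / 2 := by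
        gcongr with x _ z _
        nlinarith [mul_nonneg (N.c_nonneg x z) (sq_nonneg (f x - f z))]
    _ = ∑ x ∈ A, (∑ z ∈ A, N.c x z) * f x ^ 2 := by
        simp only [← Finset.sum_div, Finset.sum_add_distrib, hswap, Finset.sum_mul]
        ring
    _ ≤ ∑ x ∈ A, N.cv x * f x ^ 2 := by
        gcongr with x _
        exact N.sum_c_le_cv A x
    _ = ∑ x ∈ A, N.cv x * f x * f x := Finset.sum_congr rfl fun x _ ↦ by ring

theorem sq_energy_le (hf : ∀ x ∉ A, f x = 0) (hg : ∀ x ∉ A, g x = 0) :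
    N.energy A f g ^ 2 ≤ N.energy A f f * N.energy A g g := by
  let W : Submodule ℝ (V → ℝ) := Submodule.pi (↑A)ᶜ fun _ ↦ ⊥
  have mem_W : ∀ {u : V → ℝ}, u ∈ W ↔ ∀ x ∉ A, u x = 0 := by simp [W, Submodule.mem_pi]
  exact ((N.energy A).restrict W).apply_sq_le_of_symm
    (fun u ↦ energy_self_nonneg (mem_W.1 u.2))
    ⟨fun u v ↦ energy_symm (mem_W.1 u.2) (mem_W.1 v.2)⟩ ⟨f, mem_W.2 hf⟩ ⟨g, mem_W.2 hg⟩

lemma energy_eq_root_sub_sum_erase (ho : N.o ∈ A) :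
    N.energy A f g = -(f N.o * N.lap g N.o) - ∑ x ∈ A.erase N.o, f x * N.lap g x := by
  rw [energy_apply, ← Finset.add_sum_erase A _ ho, neg_add']

lemma energy_eq_root (ho : N.o ∈ A) (h : ∀ x ∈ A.erase N.o, f x * N.lap g x = 0) :
    N.energy A f g = -(f N.o * N.lap g N.o) := by
  rw [energy_eq_root_sub_sum_erase ho, Finset.sum_eq_zero h, sub_zero]

-- Thomson's principle: `-Δ (hitBeforeExit B) o` is the effective conductance between the root and
-- the complement of `B`.
theorem sq_lap_root_le_mul_energy (ho : N.o ∈ B) (hBA : B ⊆ A) {u : V → ℝ}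
    (hu : ∀ x ∉ A, u x = 0) (hharm : ∀ x ∈ B.erase N.o, N.lap u x = 0) :
    N.lap u N.o ^ 2 ≤ -N.lap (N.hitBeforeExit B) N.o * N.energy A u u := by
  have energy_hit : ∀ v : V → ℝ, (∀ x ∈ B.erase N.o, N.lap v x = 0) →
      N.energy A (N.hitBeforeExit B) v = -N.lap v N.o := fun v hv ↦ by
    rw [energy_eq_root (hBA ho), hitBeforeExit_root, one_mul]
    intro x hx
    by_cases hxB : x ∈ B
    · rw [hv x (Finset.mem_erase.2 ⟨Finset.ne_of_mem_erase hx, hxB⟩), mul_zero]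
    · rw [hitBeforeExit_of_notMem ho hxB, zero_mul]
  have hcs := sq_energy_le (N := N) (fun x hx ↦ hitBeforeExit_of_notMem ho fun h ↦ hx (hBA h)) hu
  rwa [energy_hit u hharm, energy_hit _ fun _ ↦ lap_hitBeforeExit, neg_sq] at hcs

end Energy

/-! ### The killed Green function -/

variable (N) in
/-- The Green density with pole `y` of the walk killed at the root and on leaving `A`, encoded as
the function that vanishes off `A.erase N.o` and has Laplacian `-δ_y` there. -/
def killedGreen (A : Finset V) (y : V) : V → ℝ :=
  (N.exists_dirichlet_solution (A.notMem_erase N.o) 0 (-Pi.single y 1)).choose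

variable (N) in
/-- The killed Green function cut off at height `T`. -/
def truncatedGreen (A : Finset V) (T : ℝ) (y : V) : V → ℝ :=
  fun x ↦ min (N.killedGreen A y x) T

section KilledGreen

variable {A : Finset V} {y : V} {T : ℝ}

lemma killedGreen_of_notMem_erase (hx : x ∉ A.erase N.o) : N.killedGreen A y x = 0 :=
  (N.exists_dirichlet_solution (A.notMem_erase N.o) 0 (-Pi.single y 1)).choose_spec.1 x hx

lemma killedGreen_root : N.killedGreen A y N.o = 0 :=
  killedGreen_of_notMem_erase (A.notMem_erase N.o)

lemma killedGreen_of_notMem (hx : x ∉ A) : N.killedGreen A y x = 0 :=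
  killedGreen_of_notMem_erase fun h ↦ hx (Finset.mem_of_mem_erase h)

lemma lap_killedGreen (hx : x ∈ A.erase N.o) :
    N.lap (N.killedGreen A y) x = -Pi.single (M := fun _ ↦ ℝ) y 1 x :=
  (N.exists_dirichlet_solution (A.notMem_erase N.o) 0 (-Pi.single y 1)).choose_spec.2 x hx

lemma lap_killedGreen_of_ne (hx : x ∈ A.erase N.o) (hxy : x ≠ y) :
    N.lap (N.killedGreen A y) x = 0 := by
  rw [lap_killedGreen hx, Pi.single_eq_of_ne hxy, neg_zero]

lemma lap_killedGreen_nonpos (hx : x ∈ A.erase N.o) : N.lap (N.killedGreen A y) x ≤ 0 := by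
  rw [lap_killedGreen hx]
  exact neg_nonpos.2 ((Pi.single_nonneg.2 zero_le_one : 0 ≤ Pi.single (M := fun _ ↦ ℝ) y 1) x)

lemma killedGreen_nonneg : 0 ≤ N.killedGreen A y :=
  le_of_lap_le (A.notMem_erase N.o)
    (fun x hx ↦ (lap_killedGreen_nonpos hx).trans_eq (N.lap_const 0 x).symm)
    fun _ hx ↦ (killedGreen_of_notMem_erase hx).ge

theorem energy_killedGreen (ho : N.o ∈ A) (hy : y ∈ A.erase N.o) :
    N.energy A f (N.killedGreen A y) = f y - f N.o * N.lap (N.killedGreen A y) N.o := by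
  have hsum : ∑ x ∈ A.erase N.o, f x * N.lap (N.killedGreen A y) x = -f y := by
    rw [Finset.sum_congr rfl fun x hx ↦ by rw [lap_killedGreen hx],
      Finset.sum_eq_single_of_mem y hy fun x _ hxy ↦ by simp [hxy]]
    simp
  rw [energy_eq_root_sub_sum_erase ho, hsum]
  ring

theorem lap_killedGreen_root (ho : N.o ∈ A) (hy : y ∈ A.erase N.o) :
    N.lap (N.killedGreen A y) N.o = N.hitBeforeExit A y := by
  have hzero : N.energy A (N.killedGreen A y) (N.hitBeforeExit A) = 0 := by
    rw [energy_eq_root ho fun x hx ↦ by rw [lap_hitBeforeExit hx, mul_zero], killedGreen_root,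
      zero_mul, neg_zero]
  rw [energy_symm (fun _ ↦ killedGreen_of_notMem) (fun _ ↦ hitBeforeExit_of_notMem ho),
    energy_killedGreen ho hy, hitBeforeExit_root, one_mul, sub_eq_zero] at hzero
  exact hzero.symm

theorem killedGreen_symm (ho : N.o ∈ A) (hx : x ∈ A.erase N.o) (hy : y ∈ A.erase N.o) :
    N.killedGreen A x y = N.killedGreen A y x := by
  have hsymm := energy_symm (N := N) (A := A) (f := N.killedGreen A x) (g := N.killedGreen A y)
    (fun _ ↦ killedGreen_of_notMem) (fun _ ↦ killedGreen_of_notMem)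
  simpa [energy_killedGreen ho hx, energy_killedGreen ho hy, killedGreen_root] using hsymm

lemma truncatedGreen_of_notMem (hT : 0 ≤ T) (hx : x ∉ A) : N.truncatedGreen A T y x = 0 := by
  rw [truncatedGreen, killedGreen_of_notMem hx, min_eq_left hT]

lemma truncatedGreen_root (hT : 0 ≤ T) : N.truncatedGreen A T y N.o = 0 := by
  rw [truncatedGreen, killedGreen_root, min_eq_left hT]

lemma lap_truncatedGreen_of_le (hx : N.killedGreen A y x ≤ T)
    (hnbhd : ∀ z ∈ N.nbhd x, N.killedGreen A y z ≤ T) :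
    N.lap (N.truncatedGreen A T y) x = N.lap (N.killedGreen A y) x :=
  lap_congr_of_nbhd (min_eq_left hx) fun z hz ↦ min_eq_left (hnbhd z hz)

-- Since `-Δ (truncatedGreen A T y) ≥ 0`, replacing the first argument by the larger killed Green
-- function only increases the energy, and the latter reproduces values at its pole.
theorem energy_truncatedGreen_le (ho : N.o ∈ A) (hT : 0 ≤ T) (hx : x ∈ A.erase N.o) :
    N.energy A (N.truncatedGreen A T x) (N.truncatedGreen A T y) ≤ N.truncatedGreen A T y x := by
  calc N.energy A (N.truncatedGreen A T x) (N.truncatedGreen A T y)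
      ≤ N.energy A (N.killedGreen A x) (N.truncatedGreen A T y) := by
        rw [energy_eq_root_sub_sum_erase ho, energy_eq_root_sub_sum_erase ho,
          truncatedGreen_root hT, killedGreen_root, sub_le_sub_iff_left]
        exact Finset.sum_le_sum fun z hz ↦ mul_le_mul_of_nonpos_right (min_le_left _ _)
          (lap_min_const_nonpos T (lap_killedGreen_nonpos hz))
    _ = N.energy A (N.truncatedGreen A T y) (N.killedGreen A x) :=
        energy_symm (fun _ ↦ killedGreen_of_notMem) fun _ ↦ truncatedGreen_of_notMem hT
    _ = N.truncatedGreen A T y x := by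
        rw [energy_killedGreen ho hx, truncatedGreen_root hT, zero_mul, sub_zero]

lemma energy_sum_truncatedGreen_le (ho : N.o ∈ A) (hT : 0 ≤ T) {Y : Finset V}
    (hY : Y ⊆ A.erase N.o) :
    N.energy A (∑ y ∈ Y, N.truncatedGreen A T y) (∑ y ∈ Y, N.truncatedGreen A T y)
      ≤ ∑ x ∈ Y, ∑ y ∈ Y, N.truncatedGreen A T y x := by
  simp only [map_sum, LinearMap.sum_apply]
  rw [Finset.sum_comm]
  gcongr with x hx y _
  exact energy_truncatedGreen_le ho hT (hY hx)

end KilledGreen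

/-! ### Local potentials -/

variable (N) in
/-- A local version of `IsPotential`, in which harmonicity is only required on `B`. -/
structure IsPotentialOn (B : Finset V) (h : V → ℝ) : Prop where
  nonneg : 0 ≤ h
  root : h N.o = 0
  lap_root : N.lap h N.o = 1
  harmonic : ∀ x ∈ B.erase N.o, N.lap h x = 0

lemma IsPotential.isPotentialOn {h : V → ℝ} (hh : N.IsPotential h) (B : Finset V) :
    N.IsPotentialOn B h :=
  ⟨hh.1, hh.2.1, hh.2.2.1, fun x hx ↦ hh.2.2.2 x (Finset.ne_of_mem_erase hx)⟩

lemma IsPotentialOn.lap_le_one {B : Finset V} {h : V → ℝ} (hh : N.IsPotentialOn B h)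
    (hx : x ∈ B) : N.lap h x ≤ 1 := by
  by_cases hxo : x = N.o
  · rw [hxo, hh.lap_root]
  · rw [hh.harmonic x (Finset.mem_erase.2 ⟨hxo, hx⟩)]
    exact zero_le_one

lemma le_div_of_lap_le_one {y : V} {C : ℝ} (hf : 0 ≤ f) (hlap : N.lap f x ≤ 1) (hC : f x ≤ C)
    (hxy : N.G.Adj x y) : f y ≤ (1 + N.cv x * C) / N.c x y := by
  have hterm : N.c x y * f y ≤ ∑ z ∈ N.nbhd x, N.c x z * f z :=
    Finset.single_le_sum (f := fun z ↦ N.c x z * f z)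
      (fun z _ ↦ mul_nonneg (N.c_nonneg x z) (hf z)) (mem_nbhd.2 hxy)
  rw [lap_eq_sum_sub] at hlap
  rw [le_div_iff₀ (N.c_pos x y hxy)]
  linarith [mul_le_mul_of_nonneg_left hC (N.cv_nonneg x)]

variable (N) in
theorem exists_eventually_forall_isPotentialOn_le (x : V) :
    ∃ C, ∀ᶠ B in atTop, ∀ h, N.IsPotentialOn B h → h x ≤ C := by
  refine N.induction_on_adj (P := fun x ↦ ∃ C, ∀ᶠ B in atTop, ∀ h, N.IsPotentialOn B h → h x ≤ C)
    ⟨0, .of_forall fun B h hh ↦ hh.root.le⟩ ?_ x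
  rintro x y ⟨C, hC⟩ hxy
  refine ⟨(1 + N.cv x * C) / N.c x y, ?_⟩
  filter_upwards [hC, eventually_ge_atTop {x}] with B hB hxB h hh
  exact le_div_of_lap_le_one hh.nonneg (hh.lap_le_one (Finset.singleton_subset_iff.1 hxB))
    (hB h hh) hxy

variable (N) in
theorem exists_isPotentialOn_le_on (S : Finset V) :
    ∃ (T : ℝ) (B : Finset V), 0 ≤ T ∧ ∀ h, N.IsPotentialOn B h → ∀ x ∈ S, h x ≤ T := by
  choose C hC using N.exists_eventually_forall_isPotentialOn_le
  obtain ⟨B, hB⟩ := (S.eventually_all.2 fun x _ ↦ hC x).exists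
  obtain ⟨T, hT⟩ := (insert 0 (S.image C)).exists_le
  simp only [Finset.mem_insert, Finset.mem_image] at hT
  exact ⟨T, B, hT 0 (.inl rfl), fun h hh x hx ↦
    (hB x hx h hh).trans (hT (C x) (.inr ⟨x, hx, rfl⟩))⟩

theorem exists_tendsto_isPotential {h : Finset V → V → ℝ} (hh : ∀ B, N.IsPotentialOn B (h B)) :
    ∃ (U : Ultrafilter (Finset V)) (g : V → ℝ),
      ↑U ≤ (atTop : Filter (Finset V)) ∧ N.IsPotential g ∧ Tendsto h U (𝓝 g) := by
  let U : Ultrafilter (Finset V) := .of atTop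
  have hU : ↑U ≤ (atTop : Filter (Finset V)) := Ultrafilter.of_le _
  have hconv : ∀ x, ∃ a, Tendsto (fun B ↦ h B x) U (𝓝 a) := fun x ↦ by
    obtain ⟨C, hC⟩ := N.exists_eventually_forall_isPotentialOn_le x
    have hmem : ∀ᶠ B in (U : Filter (Finset V)), h B x ∈ Set.Icc 0 C := by
      filter_upwards [hU hC] with B hB
      exact ⟨(hh B).nonneg x, hB _ (hh B)⟩
    obtain ⟨a, -, ha⟩ := isCompact_Icc.ultrafilter_le_nhds (U.map fun B ↦ h B x)
      (le_principal_iff.2 hmem)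
    exact ⟨a, ha⟩
  choose g hg using hconv
  have hlim : Tendsto h U (𝓝 g) := tendsto_pi_nhds.2 hg
  refine ⟨U, g, hU, ⟨?_, ?_, ?_, fun x hx ↦ ?_⟩, hlim⟩
  · exact fun x ↦ ge_of_tendsto' (hg x) fun B ↦ (hh B).nonneg x
  · exact tendsto_nhds_unique_of_eventuallyEq (hg N.o) tendsto_const_nhds
      (.of_forall fun B ↦ (hh B).root)
  · exact tendsto_nhds_unique_of_eventuallyEq (N.tendsto_lap hlim N.o) tendsto_const_nhds
      (.of_forall fun B ↦ (hh B).lap_root)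
  · exact tendsto_nhds_unique_of_eventuallyEq (N.tendsto_lap hlim x) tendsto_const_nhds
      (((eventually_mem_erase hx).filter_mono hU).mono fun B ↦ (hh B).harmonic x)

theorem exists_isPotential_ge_of_forall_finset {B : Finset V} {M : ℝ}
    (h : ∀ B', ∃ h, N.IsPotentialOn B' h ∧ ∀ x ∈ B' \ B, M ≤ h x) :
    ∃ h, N.IsPotential h ∧ ∀ x ∉ B, M ≤ h x := by
  choose h hpot hge using h
  obtain ⟨U, g, hU, hg, hlim⟩ := exists_tendsto_isPotential hpot
  refine ⟨g, hg, fun x hx ↦ ge_of_tendsto (tendsto_pi_nhds.1 hlim x) ?_⟩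
  filter_upwards [hU (eventually_ge_atTop {x})] with B' hB'
  exact hge B' x (Finset.mem_sdiff.2 ⟨Finset.singleton_subset_iff.1 hB', hx⟩)

variable (N) in
/-- The sum of the killed Green functions with poles in `Y`, normalized to have Laplacian `1` at
the root. -/
def normalizedGreen (A Y : Finset V) : V → ℝ :=
  (∑ y ∈ Y, N.hitBeforeExit A y)⁻¹ • ∑ y ∈ Y, N.killedGreen A y

section NormalizedGreen

variable {A B Y : Finset V}

theorem isPotentialOn_normalizedGreen (ho : N.o ∈ A) (hBA : B ⊆ A) (hYA : Y ⊆ A.erase N.o)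
    (hYB : Disjoint Y B) (hpos : 0 < ∑ y ∈ Y, N.hitBeforeExit A y) :
    N.IsPotentialOn B (N.normalizedGreen A Y) where
  nonneg := smul_nonneg (inv_nonneg.2 hpos.le) (Finset.sum_nonneg fun _ _ ↦ killedGreen_nonneg)
  root := by simp [normalizedGreen, killedGreen_root]
  lap_root := by
    rw [normalizedGreen, lap_smul, lap_sum,
      Finset.sum_congr rfl fun y hy ↦ lap_killedGreen_root ho (hYA hy), inv_mul_cancel₀ hpos.ne']
  harmonic x hx := by
    rw [normalizedGreen, lap_smul, lap_sum]
    refine mul_eq_zero_of_right _ (Finset.sum_eq_zero fun y hy ↦ ?_)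
    exact lap_killedGreen_of_ne (Finset.erase_subset_erase _ hBA hx)
      (hYB.symm.forall_ne_finset (Finset.mem_of_mem_erase hx) hy)

lemma sum_killedGreen_le_of_normalizedGreen_le {M : ℝ} (hM : 0 ≤ M)
    (hpos : 0 < ∑ y ∈ Y, N.hitBeforeExit A y) (hx : N.normalizedGreen A Y x ≤ M) :
    ∑ y ∈ Y, N.killedGreen A y x ≤ M * Y.card := by
  have hcard : ∑ y ∈ Y, N.hitBeforeExit A y ≤ Y.card := by
    simpa using Finset.sum_le_card_nsmul Y _ 1 fun y _ ↦ hitBeforeExit_le_one y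
  rw [normalizedGreen, Pi.smul_apply, Finset.sum_apply, smul_eq_mul, inv_mul_le_iff₀ hpos] at hx
  calc ∑ y ∈ Y, N.killedGreen A y x
      ≤ (∑ y ∈ Y, N.hitBeforeExit A y) * M := hx
    _ ≤ M * Y.card := by rw [mul_comm]; gcongr

lemma killedGreen_le_of_forall_isPotentialOn_le {y : V} {T : ℝ} (ho : N.o ∈ A) (hBA : B ⊆ A)
    (hyA : y ∈ A.erase N.o) (hyB : y ∉ B) (hpos : 0 < N.hitBeforeExit A y) (hT : 0 ≤ T)
    (hle : ∀ h, N.IsPotentialOn B h → h x ≤ T) : N.killedGreen A y x ≤ T := by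
  have hsum : 0 < ∑ z ∈ {y}, N.hitBeforeExit A z := by rwa [Finset.sum_singleton]
  simpa using sum_killedGreen_le_of_normalizedGreen_le hT hsum <| hle _ <|
    isPotentialOn_normalizedGreen ho hBA (Finset.singleton_subset_iff.2 hyA)
      (Finset.disjoint_singleton_left.2 hyB) hsum

end NormalizedGreen

/-! ### Charges of small energy -/

variable (N) in
/-- The total of the truncated Green function over all pairs of points of `Y`, which bounds the
Dirichlet energy of the sum of the truncated Green functions with poles in `Y`. -/
def greenEnergy (A : Finset V) (T : ℝ) (Y : Finset V) : ℝ :=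
  ∑ x ∈ Y, ∑ y ∈ Y, N.truncatedGreen A T y x

section GreenEnergy

variable {A B Y : Finset V} {M T : ℝ}

lemma greenEnergy_singleton_le : N.greenEnergy A T {x} ≤ T := by
  simp [greenEnergy, truncatedGreen]

lemma greenEnergy_insert_le (ho : N.o ∈ A) (hx : x ∈ A.erase N.o) (hY : Y ⊆ A.erase N.o)
    (hxY : x ∉ Y) :
    N.greenEnergy A T (insert x Y)
      ≤ N.greenEnergy A T Y + T + 2 * ∑ y ∈ Y, N.killedGreen A y x := by
  have hself : N.truncatedGreen A T x x ≤ T := min_le_right _ _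
  have hpole : ∑ y ∈ Y, N.truncatedGreen A T y x ≤ ∑ y ∈ Y, N.killedGreen A y x :=
    Finset.sum_le_sum fun y _ ↦ min_le_left _ _
  have hvalue : ∑ y ∈ Y, N.truncatedGreen A T x y ≤ ∑ y ∈ Y, N.killedGreen A y x :=
    Finset.sum_le_sum fun y hy ↦ (min_le_left _ _).trans_eq (killedGreen_symm ho hx (hY hy))
  simp only [greenEnergy, Finset.sum_insert hxY, Finset.sum_add_distrib]
  linarith

theorem sq_sum_hitBeforeExit_le (ho : N.o ∈ B) (hBA : B ⊆ A) (hYA : Y ⊆ A.erase N.o)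
    (hYB : Disjoint Y B) (hT : 0 ≤ T)
    (hle : ∀ y ∈ Y, ∀ x ∈ B ∪ B.biUnion N.nbhd, N.killedGreen A y x ≤ T) :
    (∑ y ∈ Y, N.hitBeforeExit A y) ^ 2
      ≤ -N.lap (N.hitBeforeExit B) N.o * N.greenEnergy A T Y := by
  have hlap : ∀ x ∈ B, ∀ y ∈ Y, N.lap (N.truncatedGreen A T y) x = N.lap (N.killedGreen A y) x :=
    fun x hx y hy ↦ lap_truncatedGreen_of_le (hle y hy x (Finset.mem_union_left _ hx)) fun z hz ↦
      hle y hy z (Finset.mem_union_right _ (Finset.mem_biUnion.2 ⟨x, hx, hz⟩))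
  have hroot : N.lap (∑ y ∈ Y, N.truncatedGreen A T y) N.o = ∑ y ∈ Y, N.hitBeforeExit A y := by
    rw [lap_sum]
    exact Finset.sum_congr rfl fun y hy ↦
      (hlap _ ho y hy).trans (lap_killedGreen_root (hBA ho) (hYA hy))
  have hharm : ∀ x ∈ B.erase N.o, N.lap (∑ y ∈ Y, N.truncatedGreen A T y) x = 0 := fun x hx ↦ by
    have hxB : x ∈ B := Finset.mem_of_mem_erase hx
    rw [lap_sum]
    exact Finset.sum_eq_zero fun y hy ↦ (hlap x hxB y hy).trans <|
      lap_killedGreen_of_ne (Finset.erase_subset_erase _ hBA hx) (hYB.symm.forall_ne_finset hxB hy)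
  have hout : ∀ x ∉ A, (∑ y ∈ Y, N.truncatedGreen A T y) x = 0 := fun x hx ↦ by
    rw [Finset.sum_apply]
    exact Finset.sum_eq_zero fun y _ ↦ truncatedGreen_of_notMem hT hx
  rw [← hroot]
  exact (sq_lap_root_le_mul_energy ho hBA hout hharm).trans <| mul_le_mul_of_nonneg_left
    (energy_sum_truncatedGreen_le (hBA ho) hT hYA) (neg_nonneg.2 lap_hitBeforeExit_root_nonpos)

lemma Recurrent.eventually_half_le_hitBeforeExit (hrec : N.Recurrent) (Y : Finset V) :
    ∀ᶠ A in atTop, ∀ y ∈ Y, 1 / 2 ≤ N.hitBeforeExit A y :=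
  Y.eventually_all.2 fun y _ ↦
    (tendsto_pi_nhds.1 hrec.tendsto_hitBeforeExit y).eventually_const_le (by norm_num)

lemma eventually_subset_erase (hY : N.o ∉ Y) : ∀ᶠ A : Finset V in atTop, Y ⊆ A.erase N.o := by
  filter_upwards [eventually_ge_atTop Y] with A hA
  exact Finset.subset_erase.2 ⟨hA, hY⟩

theorem Recurrent.eventually_sq_half_card_le (hrec : N.Recurrent) {B' : Finset V} (ho : N.o ∈ B)
    (hY : Disjoint Y (B ∪ B')) (hT : 0 ≤ T)
    (hB' : ∀ h, N.IsPotentialOn B' h → ∀ x ∈ B ∪ B.biUnion N.nbhd, h x ≤ T) :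
    ∀ᶠ A in atTop,
      (Y.card / 2 : ℝ) ^ 2 ≤ -N.lap (N.hitBeforeExit B) N.o * N.greenEnergy A T Y := by
  obtain ⟨hYB, hYB'⟩ := Finset.disjoint_union_right.1 hY
  filter_upwards [hrec.eventually_half_le_hitBeforeExit Y,
    eventually_subset_erase (Finset.disjoint_right.1 hYB ho),
    eventually_ge_atTop (B ∪ B')] with A hhit hYA hA
  obtain ⟨hBA, hB'A⟩ := Finset.union_subset_iff.1 hA
  have hgreen : ∀ y ∈ Y, ∀ x ∈ B ∪ B.biUnion N.nbhd, N.killedGreen A y x ≤ T := fun y hy x hx ↦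
    killedGreen_le_of_forall_isPotentialOn_le (hBA ho) hB'A (hYA hy)
      (Finset.disjoint_left.1 hYB' hy) (one_half_pos.trans_le (hhit y hy)) hT
      fun h hh ↦ hB' h hh x hx
  have hcharge : (Y.card / 2 : ℝ) ≤ ∑ y ∈ Y, N.hitBeforeExit A y := by
    simpa [div_eq_mul_inv] using Finset.card_nsmul_le_sum Y _ (1 / 2) hhit
  calc (Y.card / 2 : ℝ) ^ 2
      ≤ (∑ y ∈ Y, N.hitBeforeExit A y) ^ 2 := by gcongr
    _ ≤ -N.lap (N.hitBeforeExit B) N.o * N.greenEnergy A T Y :=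
        sq_sum_hitBeforeExit_le ho hBA hYA hYB hT hgreen

lemma exists_frequently_of_frequently_exists_mem {α ι : Type*} {l : Filter α} {S : Finset ι}
    {P : ι → α → Prop} (h : ∃ᶠ a in l, ∃ i ∈ S, P i a) : ∃ i ∈ S, ∃ᶠ a in l, P i a := by
  contrapose! h
  simpa [Filter.Frequently] using S.eventually_all.2 h

lemma Recurrent.exists_frequently_greenEnergy_insert_le (hrec : N.Recurrent) (hM : 0 ≤ M)
    {B' : Finset V} (hB' : ∀ h, N.IsPotentialOn B' h → ∃ x ∈ B' \ B, h x < M) (ho : N.o ∈ B)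
    (hY : Y.Nonempty) (hYB : Disjoint Y (B ∪ B')) {E : ℝ}
    (hE : ∃ᶠ A in atTop, N.greenEnergy A T Y ≤ E) :
    ∃ x ∈ B' \ B, ∃ᶠ A in atTop,
      N.greenEnergy A T (insert x Y) ≤ E + T + 2 * (M * Y.card) := by
  obtain ⟨hYB, hYB'⟩ := Finset.disjoint_union_right.1 hYB
  refine exists_frequently_of_frequently_exists_mem (hE.mp ?_)
  filter_upwards [hrec.eventually_half_le_hitBeforeExit Y,
    eventually_subset_erase (Finset.disjoint_right.1 hYB ho),
    eventually_ge_atTop (insert N.o B')] with A hhit hYA hA hEA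
  obtain ⟨hoA, hB'A⟩ := Finset.insert_subset_iff.1 hA
  have hpos : 0 < ∑ y ∈ Y, N.hitBeforeExit A y :=
    Finset.sum_pos (fun y hy ↦ one_half_pos.trans_le (hhit y hy)) hY
  obtain ⟨x, hx, hxM⟩ := hB' _ (isPotentialOn_normalizedGreen hoA hB'A hYA hYB' hpos)
  obtain ⟨hxB', hxB⟩ := Finset.mem_sdiff.1 hx
  have hxA : x ∈ A.erase N.o :=
    Finset.mem_erase.2 ⟨(ne_of_mem_of_not_mem ho hxB).symm, hB'A hxB'⟩
  have hxY : x ∉ Y := Finset.disjoint_right.1 hYB' hxB'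
  have hsum := sum_killedGreen_le_of_normalizedGreen_le hM hpos hxM.le
  exact ⟨x, hx, by linarith [greenEnergy_insert_le (T := T) hoA hxA hYA hxY]⟩

-- The points of `Y` are chosen greedily: the new point is one where the normalized Green potential
-- of the previous ones is below `M`, so the mutual energy stays of order `n ^ 2 * M` and only the
-- diagonal terms feel the truncation height.
theorem Recurrent.exists_frequently_greenEnergy_le [Infinite V] (hrec : N.Recurrent) (hM : 0 ≤ M)
    (hlow : ∀ B, ∃ B', ∀ h, N.IsPotentialOn B' h → ∃ x ∈ B' \ B, h x < M) {n : ℕ} (hn : 1 ≤ n)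
    (ho : N.o ∈ B) :
    ∃ Y : Finset V, Y.card = n ∧ Disjoint Y B ∧
      ∃ᶠ A in atTop, N.greenEnergy A T Y ≤ n * T + n ^ 2 * M := by
  induction n, hn using Nat.le_induction generalizing B with
  | base =>
    obtain ⟨x, hx⟩ := Infinite.exists_notMem_finset B
    refine ⟨{x}, Finset.card_singleton x, Finset.disjoint_singleton_left.2 hx,
      .of_forall fun A ↦ ?_⟩
    simpa using greenEnergy_singleton_le.trans (le_add_of_nonneg_right hM)
  | succ n hn ih =>
    obtain ⟨B', hB'⟩ := hlow B
    obtain ⟨Y, hcard, hYB, hE⟩ := ih (B := B ∪ B') (Finset.mem_union_left _ ho)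
    have hY : Y.Nonempty := Finset.card_pos.1 (hcard ▸ hn)
    obtain ⟨x, hx, hE⟩ := hrec.exists_frequently_greenEnergy_insert_le hM hB' ho hY hYB hE
    obtain ⟨hxB', hxB⟩ := Finset.mem_sdiff.1 hx
    have hxY : x ∉ Y := Finset.disjoint_right.1 hYB (Finset.mem_union_right _ hxB')
    refine ⟨insert x Y, by rw [Finset.card_insert_of_notMem hxY, hcard],
      Finset.disjoint_insert_left.2 ⟨hxB, hYB.mono_right Finset.subset_union_left⟩,
      hE.mono fun A hA ↦ hA.trans ?_⟩
    rw [hcard]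
    push_cast
    linarith

end GreenEnergy

/-! ### Potentials tending to infinity -/

theorem Recurrent.exists_isPotential_ge [Infinite V] (hrec : N.Recurrent) {M : ℝ} (hM : 0 ≤ M) :
    ∃ (B : Finset V) (h : V → ℝ), N.IsPotential h ∧ ∀ x ∉ B, M ≤ h x := by
  by_contra hno
  have hlow : ∀ B, ∃ B', ∀ h, N.IsPotentialOn B' h → ∃ x ∈ B' \ B, h x < M := fun B ↦ by
    by_contra! hB
    exact hno ⟨B, exists_isPotential_ge_of_forall_finset hB⟩
  obtain ⟨B, ho, hcond⟩ := hrec.exists_neg_lap_hitBeforeExit_root_lt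
    (ε := 1 / (4 * (M + 1))) (by positivity)
  obtain ⟨T, B', hT, hB'⟩ := N.exists_isPotentialOn_le_on (B ∪ B.biUnion N.nbhd)
  obtain ⟨n, hn⟩ := exists_nat_ge (max 1 T)
  have hn1 : 1 ≤ n := by exact_mod_cast (le_max_left _ _).trans hn
  have hnT : T ≤ n := (le_max_right _ _).trans hn
  obtain ⟨Y, hcard, hYB, hE⟩ := hrec.exists_frequently_greenEnergy_le (T := T) hM hlow hn1
    (Finset.mem_union_left B' ho)
  obtain ⟨A, hEA, hcharge⟩ :=
    (hE.and_eventually (hrec.eventually_sq_half_card_le ho hYB hT hB')).exists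
  have henergy : N.greenEnergy A T Y ≤ n ^ 2 * (M + 1) := by nlinarith
  refine lt_irrefl ((n : ℝ) ^ 2 / 4) ?_
  calc (n : ℝ) ^ 2 / 4
      = (Y.card / 2) ^ 2 := by rw [hcard]; ring
    _ ≤ -N.lap (N.hitBeforeExit B) N.o * N.greenEnergy A T Y := hcharge
    _ ≤ -N.lap (N.hitBeforeExit B) N.o * (n ^ 2 * (M + 1)) :=
        mul_le_mul_of_nonneg_left henergy (neg_nonneg.2 lap_hitBeforeExit_root_nonpos)
    _ < 1 / (4 * (M + 1)) * (n ^ 2 * (M + 1)) := by gcongr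
    _ = n ^ 2 / 4 := by field_simp

section Series

variable {ι : Type*} {w : ι → ℝ} {h : ι → V → ℝ}

lemma summable_smul_of_isPotential (hw : ∀ i, 0 ≤ w i) (hsum : Summable w)
    (hh : ∀ i, N.IsPotential (h i)) : Summable fun i ↦ w i • h i := by
  refine Pi.summable.2 fun x ↦ ?_
  obtain ⟨C, hC⟩ := N.exists_eventually_forall_isPotentialOn_le x
  obtain ⟨B, hB⟩ := hC.exists
  exact (hsum.mul_right C).of_nonneg_of_le (fun i ↦ mul_nonneg (hw i) ((hh i).1 x)) fun i ↦
    mul_le_mul_of_nonneg_left (hB _ ((hh i).isPotentialOn B)) (hw i)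

theorem isPotential_tsum_smul (hw : ∀ i, 0 ≤ w i) (hsum : HasSum w 1)
    (hh : ∀ i, N.IsPotential (h i)) : N.IsPotential (∑' i, w i • h i) := by
  have hS := summable_smul_of_isPotential hw hsum.summable hh
  have hlap : ∀ x, HasSum (fun i ↦ w i * N.lap (h i) x) (N.lap (∑' i, w i • h i) x) := fun x ↦ by
    simpa only [lapCLM_apply, lap_smul] using (N.lapCLM x).hasSum hS.hasSum
  refine ⟨fun v ↦ ?_, ?_, ?_, fun v hv ↦ ?_⟩
  · rw [tsum_apply hS]
    exact tsum_nonneg fun i ↦ mul_nonneg (hw i) ((hh i).1 v)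
  · rw [tsum_apply hS]
    simp [(hh _).2.1]
  · exact (hlap N.o).unique (by simpa [(hh _).2.2.1] using hsum)
  · exact (hlap v).unique (by simp [(hh _).2.2.2 v hv, hasSum_zero])

lemma smul_le_tsum_of_isPotential (hw : ∀ i, 0 ≤ w i) (hsum : Summable w)
    (hh : ∀ i, N.IsPotential (h i)) (i : ι) : w i • h i ≤ ∑' j, w j • h j :=
  (summable_smul_of_isPotential hw hsum hh).le_tsum i fun j _ ↦
    smul_nonneg (hw j) (hh j).1

end Series

end RootedNetwork

/-- **Every recurrent network has a potential tending to infinity.**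
On any infinite recurrent rooted network there exists a potential which tends
to infinity, i.e. all its sublevel sets are finite. -/
theorem exists_potential_tendsto_infinity {V : Type*} [Infinite V]
    (N : RootedNetwork V) (hrec : N.Recurrent) :
    ∃ h : V → ℝ, N.IsPotential h ∧ ∀ M : ℝ, 0 < M → {v : V | h v ≤ M}.Finite := by
  choose B h hpot hge using fun n : ℕ ↦
    hrec.exists_isPotential_ge (M := 4 ^ n) (pow_nonneg zero_le_four n)
  have hweight : HasSum (fun n : ℕ ↦ (1 : ℝ) / 2 / 2 ^ n) 1 := hasSum_geometric_two' 1
  have hnonneg : ∀ n : ℕ, (0 : ℝ) ≤ 1 / 2 / 2 ^ n := fun n ↦ by positivity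
  refine ⟨_, RootedNetwork.isPotential_tsum_smul hnonneg hweight hpot, fun M _ ↦ ?_⟩
  obtain ⟨n, hn⟩ := pow_unbounded_of_one_lt (2 * M) (one_lt_two (α := ℝ))
  refine (B n).finite_toSet.subset fun v hv ↦ by_contra fun hvB ↦ (Set.mem_ofPred.1 hv).not_gt ?_
  have hfour : (4 : ℝ) ^ n = 2 ^ n * 2 ^ n := by rw [← mul_pow]; norm_num
  calc M < 2 ^ n / 2 := by linarith
    _ = 1 / 2 / 2 ^ n * 4 ^ n := by rw [hfour]; field_simp
    _ ≤ 1 / 2 / 2 ^ n * h n v := mul_le_mul_of_nonneg_left (hge n v hvB) (hnonneg n)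
    _ ≤ (∑' k : ℕ, ((1 : ℝ) / 2 / 2 ^ k) • h k) v :=
        RootedNetwork.smul_le_tsum_of_isPotential hnonneg hweight.summable hpot n v
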